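/- arXiv:2301.08879 — 2 statements merged into one kernel-verified Lean document; each statement's English description precedes it below -/
import Mathlib

section
/- Let q be a real number with 0 < q < 1. Then the generating function for the (generalized) octagonal numbers 3m² − 2m satisfies 2·Σ_{m∈ℤ} q^{3m²−2m} = ∏_{k=0}^{∞} (1 − q^{3(k+1)/2}) · [ ∏_{k=0}^{∞} (1 − q^{(6k−1)/4})(1 − q^{(6k+7)/4}) + ∏_{k=0}^{∞} (1 + q^{(6k−1)/4})(1 + q^{(6k+7)/4}) ]. -/
/-!
The identity is the even part of the Jacobi triple product
`∏ (1 - Q^(2k+2)) (1 + z Q^(2k+1)) (1 + z⁻¹ Q^(2k+1)) = ∑ z^j Q^(j²)` (`octJacobiTriple`).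
With `Q = q^(3/4)`, adding the cases `z = q` and `z = -q` kills the odd `j` and doubles the even
ones, and `j = -2m` contributes `q^(3m² - 2m)`.

The triple product is the limit `n → ∞` of its finite form `octHasSum_finite`,
`∏_{k<n} (1 + z Q^(2k+1)) (1 + z⁻¹ Q^(2k+1)) = ∑_j [2n choose n+j] z^j Q^(j²)`, where the Gaussian
binomial has base `Q²`; it is proved by induction on `n` from a three-term recurrence
(`octBinom_succ`).
Each Gaussian binomial tends to `1 / ∏ (1 - Q^(2k+2))` and is bounded by the square of
this limit, so that dominated convergence applies.
-/

open Filter Topology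

/-- The `q`-Pochhammer symbol `(Q²; Q²)_n`. -/
noncomputable def octPoch (Q : ℝ) (n : ℕ) : ℝ := ∏ i ∈ Finset.range n, (1 - Q ^ (2 * (i + 1)))

/-- The reciprocal `1 / (Q²; Q²)_m` for all integers `m`, with the usual value `0` for `m < 0`.
With this convention `octRecip_sub_one` holds without any restriction on `m`. -/
noncomputable def octRecip (Q : ℝ) (m : ℤ) : ℝ := if 0 ≤ m then (octPoch Q m.toNat)⁻¹ else 0

/-- The Gaussian binomial coefficient `[2n choose n+j]` in base `Q²`, zero unless `|j| ≤ n`. -/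
noncomputable def octBinom (Q : ℝ) (n : ℕ) (j : ℤ) : ℝ :=
  octPoch Q (2 * n) * octRecip Q (n + j) * octRecip Q (n - j)

lemma octFactor_pos {Q : ℝ} (h0 : 0 < Q) (h1 : Q < 1) (i : ℕ) : 0 < 1 - Q ^ (2 * (i + 1)) :=
  sub_pos.2 (pow_lt_one₀ h0.le h1 (by positivity))

lemma octPoch_pos {Q : ℝ} (h0 : 0 < Q) (h1 : Q < 1) (n : ℕ) : 0 < octPoch Q n :=
  Finset.prod_pos fun i _ => octFactor_pos h0 h1 i

lemma octPoch_antitone {Q : ℝ} (h0 : 0 < Q) (h1 : Q < 1) : Antitone (octPoch Q) := by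
  refine antitone_nat_of_succ_le fun n => ?_
  rw [octPoch, Finset.prod_range_succ]
  refine mul_le_of_le_one_right (octPoch_pos h0 h1 n).le ?_
  have : 0 < Q ^ (2 * (n + 1)) := by positivity
  linarith

lemma octSummable_even {Q : ℝ} (h0 : 0 < Q) (h1 : Q < 1) :
    Summable fun k : ℕ => Q ^ (2 * (k + 1)) := by
  have h := (summable_geometric_of_lt_one (sq_nonneg Q)
    (pow_lt_one₀ h0.le h1 two_ne_zero)).mul_left (Q ^ 2)
  refine h.congr fun k => ?_
  ring

lemma octSummable_odd {Q : ℝ} (h0 : 0 < Q) (h1 : Q < 1) :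
    Summable fun k : ℕ => Q ^ (2 * k + 1) := by
  have h := (summable_geometric_of_lt_one (sq_nonneg Q)
    (pow_lt_one₀ h0.le h1 two_ne_zero)).mul_left Q
  refine h.congr fun k => ?_
  ring

lemma octPoch_tendsto {Q : ℝ} (h0 : 0 < Q) (h1 : Q < 1) :
    Tendsto (octPoch Q) atTop (𝓝 (∏' k : ℕ, (1 - Q ^ (2 * (k + 1))))) := by
  have hm : Multipliable fun k : ℕ => 1 + -Q ^ (2 * (k + 1)) :=
    multipliable_one_add_of_summable (octSummable_even h0 h1).neg.norm
  simp only [← sub_eq_add_neg] at hm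
  exact hm.tendsto_prod_tprod_nat

lemma octTprod_pos {Q : ℝ} (h0 : 0 < Q) (h1 : Q < 1) :
    0 < ∏' k : ℕ, (1 - Q ^ (2 * (k + 1))) := by
  have hne : ∏' k : ℕ, (1 + -Q ^ (2 * (k + 1))) ≠ 0 :=
    tprod_one_add_ne_zero_of_summable
      (fun i => by rw [← sub_eq_add_neg]; exact (octFactor_pos h0 h1 i).ne')
      (octSummable_even h0 h1).neg.norm
  simp only [← sub_eq_add_neg] at hne
  exact lt_of_le_of_ne
    (ge_of_tendsto' (octPoch_tendsto h0 h1) fun n => (octPoch_pos h0 h1 n).le) hne.symm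

lemma octRecip_sub_one {Q : ℝ} (h0 : 0 < Q) (h1 : Q < 1) (m : ℤ) :
    octRecip Q (m - 1) = (1 - Q ^ (2 * m)) * octRecip Q m := by
  rcases lt_trichotomy m 0 with h | h | h
  · simp [octRecip, not_le.2 h, show ¬ (1 ≤ m) by omega]
  · subst h; simp [octRecip]
  · obtain ⟨k, rfl⟩ : ∃ k : ℕ, m = k + 1 := ⟨(m - 1).toNat, by omega⟩
    have e : ((k : ℤ) + 1).toNat = k + 1 := by omega
    have hz : Q ^ (2 * ((k : ℤ) + 1)) = Q ^ (2 * (k + 1)) := by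
      rw [← zpow_natCast]; push_cast; rfl
    have hf := (octFactor_pos h0 h1 k).ne'
    have hp := (octPoch_pos h0 h1 k).ne'
    have hs : octPoch Q (k + 1) = octPoch Q k * (1 - Q ^ (2 * (k + 1))) :=
      Finset.prod_range_succ _ _
    rw [octRecip, octRecip, if_pos (by omega), if_pos (by omega), e, hz, hs]
    simp only [add_sub_cancel_right, Int.toNat_natCast]
    field_simp

/-- Three-term recurrence for the central Gaussian binomials: the coefficient form of multiplying
the finite triple product by its next factor. -/
lemma octBinom_succ {Q : ℝ} (h0 : 0 < Q) (h1 : Q < 1) (n : ℕ) (j : ℤ) :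
    octBinom Q (n + 1) j = (1 + Q ^ (4 * n + 2)) * octBinom Q n j
      + Q ^ (2 * ((n : ℤ) + 1 - j)) * octBinom Q n (j - 1)
      + Q ^ (2 * ((n : ℤ) + 1 + j)) * octBinom Q n (j + 1) := by
  have hQ := h0.ne'
  -- Everything is a multiple of the product of the values of `octRecip` at `a` and `b`.
  obtain ⟨a, ha⟩ : ∃ a : ℤ, a = n + 1 + j := ⟨_, rfl⟩
  obtain ⟨b, hb⟩ : ∃ b : ℤ, b = n + 1 - j := ⟨_, rfl⟩
  have hP : octPoch Q (2 * (n + 1))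
      = octPoch Q (2 * n) * (1 - Q ^ (4 * n + 2)) * (1 - Q ^ (4 * n + 4)) := by
    rw [octPoch, show 2 * (n + 1) = 2 * n + 1 + 1 by ring, Finset.prod_range_succ,
      Finset.prod_range_succ, octPoch]
    ring_nf
  have hxy : Q ^ (2 * a) * Q ^ (2 * b) = Q ^ (4 * n + 4) := by
    rw [← zpow_add₀ hQ, ← zpow_natCast]; congr 1; push_cast; omega
  have hxy' : Q ^ (4 * n + 2) = Q ^ (2 * a) * Q ^ (2 * b) / Q ^ 2 := by
    rw [hxy]; field_simp; ring
  have hx (c : ℤ) : Q ^ (2 * (c - 1)) = Q ^ (2 * c) / Q ^ 2 := by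
    rw [show 2 * (c - 1) = 2 * c - 2 by ring, zpow_sub₀ hQ]; norm_cast
  have ra := octRecip_sub_one h0 h1 a
  have ra' := octRecip_sub_one h0 h1 (a - 1)
  have rb := octRecip_sub_one h0 h1 b
  have rb' := octRecip_sub_one h0 h1 (b - 1)
  rw [hx, ra] at ra'
  rw [hx, rb] at rb'
  unfold octBinom
  rw [hP]
  rw [show ((n + 1 : ℕ) : ℤ) + j = a by push_cast; omega,
    show ((n + 1 : ℕ) : ℤ) - j = b by push_cast; omega,
    show (n : ℤ) + j = a - 1 by omega, show (n : ℤ) - j = b - 1 by omega,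
    show (n : ℤ) + (j - 1) = a - 1 - 1 by omega, show (n : ℤ) - (j - 1) = b by omega,
    show (n : ℤ) + (j + 1) = a by omega, show (n : ℤ) - (j + 1) = b - 1 - 1 by omega,
    ← ha, ← hb, ra', rb', ra, rb, hxy', ← hxy]
  field_simp
  ring

/-- The finite form of the Jacobi triple product. -/
lemma octHasSum_finite {Q z : ℝ} (h0 : 0 < Q) (h1 : Q < 1) (hz : z ≠ 0) (n : ℕ) :
    HasSum (fun j : ℤ => octBinom Q n j * (z ^ j * Q ^ (j ^ 2)))
      (∏ k ∈ Finset.range n, ((1 + z * Q ^ (2 * k + 1)) * (1 + z⁻¹ * Q ^ (2 * k + 1)))) := by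
  have hQ := h0.ne'
  induction n with
  | zero =>
    have h := hasSum_single (f := fun j : ℤ => octBinom Q 0 j * (z ^ j * Q ^ (j ^ 2))) 0 ?_
    · simpa [octBinom, octRecip, octPoch] using h
    · intro j hj
      rcases lt_or_gt_of_ne hj with h | h
      · simp [octBinom, octRecip, not_le.2 h]
      · simp [octBinom, octRecip, not_le.2 h]
  | succ n ih =>
    have hm := ((Equiv.subRight (1 : ℤ)).hasSum_iff).2 ih
    have hp := ((Equiv.addRight (1 : ℤ)).hasSum_iff).2 ih
    have key := ((ih.mul_left (1 + Q ^ (4 * n + 2))).add (hm.mul_left (z * Q ^ (2 * n + 1)))).add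
      (hp.mul_left (z⁻¹ * Q ^ (2 * n + 1)))
    have hS (p : ℝ) : p * ((1 + z * Q ^ (2 * n + 1)) * (1 + z⁻¹ * Q ^ (2 * n + 1)))
        = (1 + Q ^ (4 * n + 2)) * p + z * Q ^ (2 * n + 1) * p + z⁻¹ * Q ^ (2 * n + 1) * p := by
      linear_combination p * Q ^ (4 * n + 2) * mul_inv_cancel₀ hz
    rw [Finset.prod_range_succ, hS]
    refine (congrArg (HasSum · _) (funext fun j => ?_)).mpr key
    have e1 : z * Q ^ (2 * n + 1) * (z ^ (j - 1) * Q ^ ((j - 1) ^ 2))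
        = Q ^ (2 * ((n : ℤ) + 1 - j)) * (z ^ j * Q ^ (j ^ 2)) := by
      have : Q ^ (2 * n + 1) * Q ^ ((j - 1) ^ 2)
          = Q ^ (2 * ((n : ℤ) + 1 - j)) * Q ^ (j ^ 2) := by
        rw [← zpow_natCast, ← zpow_add₀ hQ, ← zpow_add₀ hQ]; congr 1; push_cast; ring
      rw [zpow_sub_one₀ hz]
      field_simp
      linear_combination this
    have e2 : z⁻¹ * Q ^ (2 * n + 1) * (z ^ (j + 1) * Q ^ ((j + 1) ^ 2))
        = Q ^ (2 * ((n : ℤ) + 1 + j)) * (z ^ j * Q ^ (j ^ 2)) := by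
      have : Q ^ (2 * n + 1) * Q ^ ((j + 1) ^ 2)
          = Q ^ (2 * ((n : ℤ) + 1 + j)) * Q ^ (j ^ 2) := by
        rw [← zpow_natCast, ← zpow_add₀ hQ, ← zpow_add₀ hQ]; congr 1; push_cast; ring
      rw [zpow_add_one₀ hz]
      field_simp
      linear_combination this
    simp only [Function.comp, Equiv.coe_addRight, Equiv.subRight_apply]
    rw [octBinom_succ h0 h1]
    linear_combination -octBinom Q n (j - 1) * e1 - octBinom Q n (j + 1) * e2

lemma octSummable_nat {Q z : ℝ} (h0 : 0 < Q) (h1 : Q < 1) (hz : z ≠ 0) :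
    Summable fun n : ℕ => z ^ n * Q ^ (n ^ 2) := by
  refine summable_of_ratio_test_tendsto_lt_one (l := 0) one_pos
    (Eventually.of_forall fun n => mul_ne_zero (pow_ne_zero _ hz) (pow_ne_zero _ h0.ne')) ?_
  have h := (octSummable_odd h0 h1).tendsto_atTop_zero.const_mul |z|
  rw [mul_zero] at h
  refine h.congr fun n => ?_
  have hz' : |z| ≠ 0 := abs_ne_zero.2 hz
  simp only [norm_mul, norm_pow, Real.norm_eq_abs, abs_of_pos h0]
  field_simp
  ring

lemma octSummable_int {Q z : ℝ} (h0 : 0 < Q) (h1 : Q < 1) (hz : z ≠ 0) :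
    Summable fun j : ℤ => z ^ j * Q ^ (j ^ 2) := by
  refine Summable.of_nat_of_neg ((octSummable_nat h0 h1 hz).congr fun n => ?_)
    ((octSummable_nat h0 h1 (inv_ne_zero hz)).congr fun n => ?_)
  · norm_cast
  · rw [neg_sq, zpow_neg, inv_pow]; norm_cast

lemma octRecip_bound {Q : ℝ} (h0 : 0 < Q) (h1 : Q < 1) (m : ℤ) :
    0 ≤ octRecip Q m ∧ octRecip Q m ≤ (∏' k : ℕ, (1 - Q ^ (2 * (k + 1))))⁻¹ := by
  have hP := octTprod_pos h0 h1
  unfold octRecip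
  split_ifs
  · exact ⟨(inv_pos.2 (octPoch_pos h0 h1 _)).le,
      inv_anti₀ hP ((octPoch_antitone h0 h1).le_of_tendsto (octPoch_tendsto h0 h1) _)⟩
  · exact ⟨le_rfl, (inv_pos.2 hP).le⟩

lemma octRecip_tendsto {Q : ℝ} (h0 : 0 < Q) (h1 : Q < 1) :
    Tendsto (octRecip Q) atTop (𝓝 (∏' k : ℕ, (1 - Q ^ (2 * (k + 1))))⁻¹) := by
  have ht : Tendsto Int.toNat atTop atTop :=
    tendsto_atTop.2 fun b => (eventually_ge_atTop (b : ℤ)).mono fun a ha => by omega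
  refine (((octPoch_tendsto h0 h1).comp ht).inv₀ (octTprod_pos h0 h1).ne').congr' ?_
  filter_upwards [eventually_ge_atTop 0] with m hm
  simp [octRecip, hm]

lemma octBinom_tendsto {Q : ℝ} (h0 : 0 < Q) (h1 : Q < 1) (j : ℤ) :
    Tendsto (fun n => octBinom Q n j) atTop (𝓝 (∏' k : ℕ, (1 - Q ^ (2 * (k + 1))))⁻¹) := by
  have hn : Tendsto (fun n : ℕ => (n : ℤ)) atTop atTop := tendsto_natCast_atTop_atTop
  have h2 : Tendsto (fun n : ℕ => 2 * n) atTop atTop :=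
    tendsto_atTop.2 fun b => (eventually_ge_atTop b).mono fun a ha => by omega
  have ha := (octRecip_tendsto h0 h1).comp (tendsto_atTop_add_const_right _ j hn)
  have hb := (octRecip_tendsto h0 h1).comp (tendsto_atTop_add_const_right _ (-j) hn)
  have h := (((octPoch_tendsto h0 h1).comp h2).mul ha).mul hb
  rw [mul_inv_cancel₀ (octTprod_pos h0 h1).ne', one_mul] at h
  exact h

lemma octBinom_bound {Q : ℝ} (h0 : 0 < Q) (h1 : Q < 1) (n : ℕ) (j : ℤ) :
    |octBinom Q n j| ≤ (∏' k : ℕ, (1 - Q ^ (2 * (k + 1))))⁻¹ ^ 2 := by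
  obtain ⟨a0, a1⟩ := octRecip_bound h0 h1 (n + j)
  obtain ⟨b0, b1⟩ := octRecip_bound h0 h1 (n - j)
  have hp := octPoch_pos h0 h1 (2 * n)
  have hp1 : octPoch Q (2 * n) ≤ 1 := by
    simpa [octPoch] using octPoch_antitone h0 h1 (Nat.zero_le (2 * n))
  unfold octBinom
  rw [abs_of_nonneg (by positivity), sq]
  exact mul_le_mul ((mul_le_of_le_one_left a0 hp1).trans a1) b1 b0 (a0.trans a1)

lemma octMultipliable {Q : ℝ} (h0 : 0 < Q) (h1 : Q < 1) (z : ℝ) :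
    Multipliable fun k : ℕ => 1 + z * Q ^ (2 * k + 1) :=
  multipliable_one_add_of_summable ((octSummable_odd h0 h1).mul_left z).norm

/-- The Jacobi triple product. -/
lemma octJacobiTriple {Q z : ℝ} (h0 : 0 < Q) (h1 : Q < 1) (hz : z ≠ 0) :
    ∑' j : ℤ, z ^ j * Q ^ (j ^ 2) = (∏' k : ℕ, (1 - Q ^ (2 * (k + 1)))) *
      ∏' k : ℕ, ((1 + z * Q ^ (2 * k + 1)) * (1 + z⁻¹ * Q ^ (2 * k + 1))) := by
  have hP := (octTprod_pos h0 h1).ne'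
  have hl := ((octMultipliable h0 h1 z).mul (octMultipliable h0 h1 z⁻¹)).tendsto_prod_tprod_nat
  have hr := tendsto_tsum_of_dominated_convergence (𝓕 := atTop)
    (f := fun (n : ℕ) (j : ℤ) => octBinom Q n j * (z ^ j * Q ^ (j ^ 2)))
    ((octSummable_int h0 h1 hz).norm.mul_left ((∏' k : ℕ, (1 - Q ^ (2 * (k + 1))))⁻¹ ^ 2))
    (fun j => (octBinom_tendsto h0 h1 j).mul_const _)
    (Eventually.of_forall fun n j => by
      rw [norm_mul]
      exact mul_le_mul_of_nonneg_right (octBinom_bound h0 h1 n j) (norm_nonneg _))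
  simp only [(octHasSum_finite h0 h1 hz _).tsum_eq] at hr
  rw [tendsto_nhds_unique hl hr, tsum_mul_left, mul_inv_cancel_left₀ hP]

theorem octagonal_numbers_generating_function (q : ℝ) (hq0 : 0 < q) (hq1 : q < 1) :
    2 * ∑' m : ℤ, q ^ (3 * (m : ℝ) ^ 2 - 2 * (m : ℝ))
    = (∏' k : ℕ, (1 - q ^ (3 * ((k : ℝ) + 1) / 2))) *
      ((∏' k : ℕ, ((1 - q ^ ((6 * (k : ℝ) - 1) / 4)) * (1 - q ^ ((6 * (k : ℝ) + 7) / 4))))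
        + ∏' k : ℕ, ((1 + q ^ ((6 * (k : ℝ) - 1) / 4)) * (1 + q ^ ((6 * (k : ℝ) + 7) / 4)))) := by
  obtain ⟨Q, hQ⟩ : ∃ Q : ℝ, Q = q ^ (3 / 4 : ℝ) := ⟨_, rfl⟩
  have h0 : 0 < Q := hQ ▸ Real.rpow_pos_of_pos hq0 _
  have h1 : Q < 1 := hQ ▸ Real.rpow_lt_one hq0.le hq1 (by norm_num)
  have hpow (n : ℕ) : Q ^ n = q ^ (3 / 4 * n : ℝ) := by
    rw [hQ, ← Real.rpow_natCast, ← Real.rpow_mul hq0.le]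
  have hzpow (n : ℤ) : Q ^ n = q ^ (3 / 4 * n : ℝ) := by
    rw [hQ, ← Real.rpow_intCast, ← Real.rpow_mul hq0.le]
  have ea (k : ℕ) : q ^ (3 * ((k : ℝ) + 1) / 2) = Q ^ (2 * (k + 1)) := by
    rw [hpow]; congr 1; push_cast; ring
  have eb (k : ℕ) : q ^ ((6 * (k : ℝ) - 1) / 4) = q⁻¹ * Q ^ (2 * k + 1) := by
    rw [hpow, ← Real.rpow_neg_one, ← Real.rpow_add hq0]; congr 1; push_cast; ring
  have ec (k : ℕ) : q ^ ((6 * (k : ℝ) + 7) / 4) = q * Q ^ (2 * k + 1) := by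
    rw [hpow, ← Real.rpow_one_add' hq0.le (by positivity)]; congr 1; push_cast; ring
  simp only [ea, eb, ec]
  have hq := hq0.ne'
  have jp := octJacobiTriple h0 h1 hq
  have jm := octJacobiTriple h0 h1 (neg_ne_zero.2 hq)
  have sp := octSummable_int h0 h1 hq
  have sm := octSummable_int h0 h1 (neg_ne_zero.2 hq)
  have tp : ∏' k : ℕ, ((1 + q⁻¹ * Q ^ (2 * k + 1)) * (1 + q * Q ^ (2 * k + 1)))
      = ∏' k : ℕ, ((1 + q * Q ^ (2 * k + 1)) * (1 + q⁻¹ * Q ^ (2 * k + 1))) :=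
    tprod_congr fun k => mul_comm _ _
  have tm : ∏' k : ℕ, ((1 - q⁻¹ * Q ^ (2 * k + 1)) * (1 - q * Q ^ (2 * k + 1)))
      = ∏' k : ℕ, ((1 + -q * Q ^ (2 * k + 1)) * (1 + (-q)⁻¹ * Q ^ (2 * k + 1))) :=
    tprod_congr fun k => by rw [inv_neg]; ring
  rw [tp, tm, mul_add, ← jp, ← jm, ← sm.tsum_add sp, ← tsum_mul_left]
  have hinj : Function.Injective fun m : ℤ => -(2 * m) := fun a b h => by
    simp only at h; omega
  symm
  rw [← hinj.tsum_eq]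
  · refine tsum_congr fun m => ?_
    have hev : Even (-(2 * m)) := (even_two_mul m).neg
    rw [hev.neg_zpow, ← two_mul, hzpow, ← Real.rpow_intCast q, ← Real.rpow_add hq0]
    congr 2; push_cast; ring
  · intro j hj
    rcases Int.even_or_odd j with he | ho
    · obtain ⟨r, hr⟩ := he
      exact ⟨-r, by simp only; omega⟩
    · exact absurd (by simp only [ho.neg_zpow]; ring) hj
end

section
/- Let q be a real number with 0 < q < 1 and let r be an integer with r ≥ 3. The m-th r-gonal number is ((r−2)m² + (4−r)m)/2, and its generating function satisfies 2·Σ_{m∈ℤ} q^{((r−2)m² + (4−r)m)/2} = ∏_{k=0}^{∞} (1 − q^{(r−2)/4 + k(r−2)/4})(1 − q^{(6−r)/8 + k(r−2)/4})(1 − q^{(3r−10)/8 + k(r−2)/4}) + ∏_{k=0}^{∞} (1 − q^{(r−2)/4 + k(r−2)/4})(1 + q^{(6−r)/8 + k(r−2)/4})(1 + q^{(3r−10)/8 + k(r−2)/4}). -/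
/-!
With `Q = q^((r-2)/4)` and `z = q^((6-r)/8)`, the two products are the Jacobi triple products
`∏ (1 - Q^(k+1)) (1 ± z Q^k) (1 ± z⁻¹ Q^(k+1)) = ∑_j Q^(j(j-1)/2) (±z)^j`. In their sum the terms of
odd index `j` cancel and those of index `j = 2m` double, and `Q^(m(2m-1)) z^(2m)` is `q` to the
power `((r-2)m² + (4-r)m)/2`.

The triple product identity (`hasSum_thetaTerm`) is obtained from its finite form
`hasSum_finite_triple`,
`∏_{k<n} (1 + z Q^k) ∏_{k<m} (1 + z⁻¹ Q^(k+1)) = ∑_j [m+n choose m+j]_Q Q^(j(j-1)/2) z^j`,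
proved by induction on `m` and `n` through the two `Q`-Pascal rules. Put `m = n`, multiply by
`(Q; Q)_n` and let `n → ∞`: each coefficient tends to `1` and all are bounded by one constant, so
dominated convergence for series gives the identity.
-/

open Filter Topology

/-- The finite product `(Q; Q)_n = ∏_{k < n} (1 - Q^(k+1))`. -/
noncomputable def eulerProd (Q : ℝ) (n : ℕ) : ℝ := ∏ k ∈ Finset.range n, (1 - Q ^ (k + 1))

/-- The reciprocal `1 / (Q; Q)_j`, extended by zero to negative integers `j`. With this convention
the recursion `invEuler_sub_one` holds for every integer `j`. -/
noncomputable def invEuler (Q : ℝ) (j : ℤ) : ℝ := if j < 0 then 0 else (eulerProd Q j.toNat)⁻¹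

/-- The general term `Q^(j(j-1)/2) z^j` of the theta series in the Jacobi triple product. -/
noncomputable def thetaTerm (Q z : ℝ) (j : ℤ) : ℝ := Q ^ (((j : ℝ) ^ 2 - j) / 2) * z ^ j

lemma eulerProd_pos {Q : ℝ} (h0 : 0 < Q) (h1 : Q < 1) (n : ℕ) : 0 < eulerProd Q n :=
  Finset.prod_pos fun k _ => sub_pos.2 (pow_lt_one₀ h0.le h1 (by omega))

lemma invEuler_natCast (Q : ℝ) (n : ℕ) : invEuler Q n = (eulerProd Q n)⁻¹ := by
  simp [invEuler]

lemma invEuler_sub_one {Q : ℝ} (h0 : 0 < Q) (h1 : Q < 1) (j : ℤ) :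
    invEuler Q (j - 1) = (1 - Q ^ j) * invEuler Q j := by
  rcases lt_trichotomy j 0 with hj | rfl | hj
  · simp [invEuler, hj, show j - 1 < 0 by omega]
  · simp [invEuler]
  · obtain ⟨n, rfl⟩ : ∃ n : ℕ, j = (n + 1 : ℕ) := ⟨(j - 1).toNat, by omega⟩
    have e : ((n + 1 : ℕ) : ℤ) - 1 = n := by push_cast; ring
    rw [e, invEuler_natCast, invEuler_natCast, zpow_natCast, eulerProd, eulerProd,
      Finset.prod_range_succ]
    have : 1 - Q ^ (n + 1) ≠ 0 := (sub_pos.2 (pow_lt_one₀ h0.le h1 (by omega))).ne'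
    rw [mul_inv]
    field_simp

lemma thetaTerm_add_one {Q z : ℝ} (h0 : 0 < Q) (hz : z ≠ 0) (j : ℤ) :
    thetaTerm Q z (j + 1) = Q ^ j * z * thetaTerm Q z j := by
  have e : (((j + 1 : ℤ) : ℝ) ^ 2 - (j + 1 : ℤ)) / 2 = ((j : ℝ) ^ 2 - j) / 2 + (j : ℤ) := by
    push_cast; ring
  rw [thetaTerm, thetaTerm, e, Real.rpow_add h0, Real.rpow_intCast, zpow_add_one₀ hz]
  ring

/-- Finite form of the Jacobi triple product, i.e. the `q`-binomial theorem with shifted index. The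
sum over `j` has finite support, as `invEuler` vanishes at negative integers. -/
lemma hasSum_finite_triple {Q z : ℝ} (h0 : 0 < Q) (h1 : Q < 1) (hz : z ≠ 0) (m n : ℕ) :
    HasSum (fun j : ℤ => eulerProd Q (m + n) *
        (invEuler Q (m + j) * invEuler Q (n - j)) * thetaTerm Q z j)
      ((∏ k ∈ Finset.range n, (1 + z * Q ^ k)) *
        ∏ k ∈ Finset.range m, (1 + z⁻¹ * Q ^ (k + 1))) := by
  have hQ : Q ≠ 0 := h0.ne'
  induction m with
  | zero =>
    induction n with
    | zero =>
      have := hasSum_single (f := fun j : ℤ => eulerProd Q (0 + 0) *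
        (invEuler Q ((0 : ℕ) + j) * invEuler Q ((0 : ℕ) - j)) * thetaTerm Q z j) 0 (by
          intro j hj
          rcases lt_or_gt_of_ne hj with h | h
          · simp [invEuler, h]
          · simp [invEuler, h])
      simpa [invEuler, eulerProd, thetaTerm] using this
    | succ n ih =>
      rw [Finset.prod_range_succ]
      have h2 := ((Equiv.subRight (1 : ℤ)).hasSum_iff.2 ih).mul_left (z * Q ^ n)
      convert ih.add h2 using 1
      · funext j
        have r1 := invEuler_sub_one h0 h1 (((0 : ℕ) : ℤ) + j)
        have r2 := invEuler_sub_one h0 h1 (((n + 1 : ℕ) : ℤ) - j)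
        have r3 := thetaTerm_add_one h0 hz (j - 1)
        have e1 : ((n : ℕ) : ℤ) - (j - 1) = ((n + 1 : ℕ) : ℤ) - j := by push_cast; ring
        have e2 : ((n + 1 : ℕ) : ℤ) - j - 1 = (n : ℤ) - j := by push_cast; ring
        have e3 : eulerProd Q (0 + (n + 1)) = eulerProd Q (0 + n) * (1 - Q ^ (n + 1)) := by
          simp [eulerProd, Finset.prod_range_succ]
        simp only [Function.comp, Equiv.subRight_apply]
        rw [e2] at r2
        rw [sub_add_cancel] at r3
        rw [add_sub_assoc] at r1
        rw [e1, e3, r1, r2, r3, zpow_sub₀ hQ, zpow_sub₀ hQ, zpow_natCast]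
        have : Q ^ j ≠ 0 := zpow_ne_zero _ hQ
        simp only [Nat.cast_zero, zero_add, zpow_one]
        field_simp
        ring
      · ring
  | succ m ih =>
    rw [Finset.prod_range_succ]
    have h2 := ((Equiv.addRight (1 : ℤ)).hasSum_iff.2 ih).mul_left (z⁻¹ * Q ^ (m + 1))
    convert ih.add h2 using 1
    · funext j
      have r1 := invEuler_sub_one h0 h1 (((m + 1 : ℕ) : ℤ) + j)
      have r2 := invEuler_sub_one h0 h1 ((n : ℤ) - j)
      have r3 := thetaTerm_add_one h0 hz j
      have e1 : (m : ℤ) + (j + 1) = ((m + 1 : ℕ) : ℤ) + j := by push_cast; ring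
      have e2 : ((m + 1 : ℕ) : ℤ) + j - 1 = (m : ℤ) + j := by push_cast; ring
      have e4 : (n : ℤ) - (j + 1) = n - j - 1 := by ring
      have e3 : eulerProd Q (m + 1 + n) = eulerProd Q (m + n) * (1 - Q ^ (m + n + 1)) := by
        rw [show m + 1 + n = m + n + 1 by ring]
        simp [eulerProd, Finset.prod_range_succ]
      simp only [Function.comp, Equiv.coe_addRight]
      rw [e2] at r1
      rw [e1, e3, e4, r1, r2, r3, zpow_sub₀ hQ, zpow_add₀ hQ, zpow_natCast, zpow_natCast]
      have : Q ^ j ≠ 0 := zpow_ne_zero _ hQ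
      field_simp
      ring
    · ring

lemma summable_thetaTerm_nat {Q x : ℝ} (h0 : 0 < Q) (h1 : Q < 1) (hx : x ≠ 0) :
    Summable (fun n : ℕ => thetaTerm Q x n) := by
  have hne (n : ℕ) : thetaTerm Q x n ≠ 0 :=
    mul_ne_zero (Real.rpow_pos_of_pos h0 _).ne' (zpow_ne_zero _ hx)
  refine summable_of_ratio_test_tendsto_lt_one (l := 0) one_pos (.of_forall hne) ?_
  have : Tendsto (fun n : ℕ => ‖Q ^ n * x‖) atTop (𝓝 0) := by
    simpa using ((tendsto_pow_atTop_nhds_zero_of_lt_one h0.le h1).mul_const x).norm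
  refine this.congr fun n => ?_
  rw [Nat.cast_succ, thetaTerm_add_one h0 hx, norm_mul _ (thetaTerm Q x n),
    mul_div_cancel_right₀ _ (norm_ne_zero_iff.2 (hne n)), zpow_natCast]

lemma summable_thetaTerm {Q z : ℝ} (h0 : 0 < Q) (h1 : Q < 1) (hz : z ≠ 0) :
    Summable (thetaTerm Q z) := by
  refine Summable.of_nat_of_neg (summable_thetaTerm_nat h0 h1 hz) ?_
  refine (summable_thetaTerm_nat h0 h1 (mul_ne_zero h0.ne' (inv_ne_zero hz))).congr fun n => ?_
  have e : ((((-n : ℤ)) : ℝ) ^ 2 - ((-n : ℤ) : ℝ)) / 2 = (((n : ℤ) : ℝ) ^ 2 - (n : ℤ)) / 2 + (n : ℕ) := by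
    push_cast; ring
  rw [thetaTerm, thetaTerm, e, Real.rpow_add h0, Real.rpow_natCast, zpow_neg, zpow_natCast,
    zpow_natCast, mul_pow, inv_pow]
  ring

lemma summable_geom_mul {Q : ℝ} (h0 : 0 < Q) (h1 : Q < 1) (c : ℝ) :
    Summable (fun k : ℕ => c * Q ^ k) :=
  (summable_geometric_of_lt_one h0.le h1).mul_left c

lemma exists_tendsto_eulerProd {Q : ℝ} (h0 : 0 < Q) (h1 : Q < 1) :
    ∃ L, L ≠ 0 ∧ Tendsto (eulerProd Q) atTop (𝓝 L) := by
  have hs := summable_geom_mul h0 h1 (-Q)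
  refine ⟨∏' k : ℕ, (1 + -Q * Q ^ k), ?_, ?_⟩
  · refine tprod_one_add_ne_zero_of_summable (fun k => ?_) hs.norm
    have : Q ^ (k + 1) < 1 := pow_lt_one₀ h0.le h1 (by omega)
    rw [pow_succ] at this
    intro h; linarith
  · refine (Real.multipliable_one_add_of_summable hs).tendsto_prod_tprod_nat.congr fun n => ?_
    exact Finset.prod_congr rfl fun k _ => by ring

/-- The Jacobi triple product identity, for a real base `0 < Q < 1` and a real `z ≠ 0`. -/
lemma hasSum_thetaTerm {Q z : ℝ} (h0 : 0 < Q) (h1 : Q < 1) (hz : z ≠ 0) :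
    HasSum (thetaTerm Q z)
      (∏' k : ℕ, ((1 - Q ^ (k + 1)) * (1 + z * Q ^ k) * (1 + z⁻¹ * Q ^ (k + 1)))) := by
  obtain ⟨L, hL, hPL⟩ := exists_tendsto_eulerProd h0 h1
  have hR : Tendsto (fun n : ℕ => invEuler Q n) atTop (𝓝 L⁻¹) :=
    (hPL.inv₀ hL).congr fun n => (invEuler_natCast Q n).symm
  have hRi : Tendsto (invEuler Q) atTop (𝓝 L⁻¹) := by
    rwa [← Nat.map_cast_int_atTop, tendsto_map'_iff]
  have hpos (j : ℤ) : 0 ≤ invEuler Q j := by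
    unfold invEuler
    split_ifs
    · exact le_rfl
    · exact (inv_pos.2 (eulerProd_pos h0 h1 _)).le
  obtain ⟨M, hM0, hM⟩ : ∃ M, 0 ≤ M ∧ ∀ j, invEuler Q j ≤ M := by
    obtain ⟨M, hM⟩ := hR.bddAbove_range
    have hM' (n : ℕ) : invEuler Q n ≤ M := hM ⟨n, rfl⟩
    refine ⟨M, (hpos _).trans (hM' 0), fun j => ?_⟩
    rcases lt_or_ge j 0 with hj | hj
    · rw [invEuler, if_pos hj]
      exact (hpos _).trans (hM' 0)
    · lift j to ℕ using hj
      exact hM' j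
  have hP1 (n : ℕ) : eulerProd Q n ≤ 1 :=
    Finset.prod_le_one (fun k _ => (sub_pos.2 (pow_lt_one₀ h0.le h1 (by omega))).le)
      fun k _ => by linarith [pow_pos h0 (k + 1)]
  let f : ℕ → ℤ → ℝ := fun n j => eulerProd Q n * (eulerProd Q (n + n) *
    (invEuler Q (n + j) * invEuler Q (n - j)) * thetaTerm Q z j)
  have hf (n : ℕ) : ∑' j, f n j = ∏ k ∈ Finset.range n,
      ((1 - Q ^ (k + 1)) * (1 + z * Q ^ k) * (1 + z⁻¹ * Q ^ (k + 1))) := by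
    rw [((hasSum_finite_triple h0 h1 hz n n).mul_left (eulerProd Q n)).tsum_eq, eulerProd,
      Finset.prod_mul_distrib, Finset.prod_mul_distrib, mul_assoc]
  have hlim : Tendsto (fun n => ∑' j, f n j) atTop (𝓝 (∑' j, thetaTerm Q z j)) := by
    refine tendsto_tsum_of_dominated_convergence (bound := fun j => M * M * ‖thetaTerm Q z j‖)
      ((summable_thetaTerm h0 h1 hz).norm.mul_left _) (fun j => ?_) (.of_forall fun n j => ?_)
    · have hn : Tendsto (fun n : ℕ => (n : ℤ)) atTop atTop := tendsto_natCast_atTop_atTop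
      have a1 := hRi.comp (tendsto_atTop_add_const_right _ j hn)
      have a2 := hRi.comp (tendsto_atTop_add_const_right _ (-j) hn)
      have a3 := hPL.comp (tendsto_id.atTop_add_nonneg (g := fun n : ℕ => n) fun n => n.zero_le)
      have := hPL.mul ((a3.mul (a1.mul a2)).mul_const (thetaTerm Q z j))
      have e : L * (L * (L⁻¹ * L⁻¹) * thetaTerm Q z j) = thetaTerm Q z j := by field_simp
      rwa [e] at this
    · simp only [f, norm_mul]
      have b (n : ℕ) : ‖eulerProd Q n‖ ≤ 1 := by
        rw [Real.norm_of_nonneg (eulerProd_pos h0 h1 n).le]; exact hP1 n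
      have c (j : ℤ) : ‖invEuler Q j‖ ≤ M := by
        rw [Real.norm_of_nonneg (hpos j)]; exact hM j
      calc _ ≤ 1 * (1 * (M * M) * ‖thetaTerm Q z j‖) := by
            gcongr <;> first | exact b _ | exact c _
        _ = _ := by ring
  have hmul : Multipliable (fun k : ℕ =>
      (1 - Q ^ (k + 1)) * (1 + z * Q ^ k) * (1 + z⁻¹ * Q ^ (k + 1))) := by
    refine (((Real.multipliable_one_add_of_summable (summable_geom_mul h0 h1 (-Q))).mul
      (Real.multipliable_one_add_of_summable (summable_geom_mul h0 h1 z))).mul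
      (Real.multipliable_one_add_of_summable (summable_geom_mul h0 h1 (z⁻¹ * Q)))).congr
      fun k => ?_
    ring
  have := tendsto_nhds_unique (hlim.congr hf) hmul.tendsto_prod_tprod_nat
  rw [← this]
  exact (summable_thetaTerm h0 h1 hz).hasSum

theorem polygonal_numbers_generating_function (q : ℝ) (hq0 : 0 < q) (hq1 : q < 1)
    (r : ℤ) (hr : 3 ≤ r) :
    2 * ∑' m : ℤ, q ^ ((((r : ℝ) - 2) * (m : ℝ) ^ 2 + (4 - (r : ℝ)) * (m : ℝ)) / 2)
    = (∏' k : ℕ, ((1 - q ^ (((r : ℝ) - 2) / 4 + (k : ℝ) * (((r : ℝ) - 2) / 4)))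
        * (1 - q ^ ((6 - (r : ℝ)) / 8 + (k : ℝ) * (((r : ℝ) - 2) / 4)))
        * (1 - q ^ ((3 * (r : ℝ) - 10) / 8 + (k : ℝ) * (((r : ℝ) - 2) / 4)))))
      + ∏' k : ℕ, ((1 - q ^ (((r : ℝ) - 2) / 4 + (k : ℝ) * (((r : ℝ) - 2) / 4)))
          * (1 + q ^ ((6 - (r : ℝ)) / 8 + (k : ℝ) * (((r : ℝ) - 2) / 4)))
          * (1 + q ^ ((3 * (r : ℝ) - 10) / 8 + (k : ℝ) * (((r : ℝ) - 2) / 4)))) := by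
  have hr' : (3 : ℝ) ≤ r := by exact_mod_cast hr
  set Q : ℝ := q ^ (((r : ℝ) - 2) / 4) with hQ
  set z : ℝ := q ^ ((6 - (r : ℝ)) / 8) with hz
  have hQ0 : 0 < Q := Real.rpow_pos_of_pos hq0 _
  have hQ1 : Q < 1 := Real.rpow_lt_one hq0.le hq1 (by linarith)
  have hz0 : 0 < z := Real.rpow_pos_of_pos hq0 _
  have hpow (c : ℝ) (k : ℕ) : q ^ (c + (k : ℝ) * (((r : ℝ) - 2) / 4)) = q ^ c * Q ^ k := by
    rw [Real.rpow_add hq0, mul_comm (k : ℝ), Real.rpow_mul hq0.le, Real.rpow_natCast]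
  have hzQ : q ^ ((3 * (r : ℝ) - 10) / 8) = z⁻¹ * Q := by
    rw [hz, hQ, ← Real.rpow_neg hq0.le, ← Real.rpow_add hq0]
    congr 1; ring
  simp only [hpow, hzQ]
  rw [← hQ, ← hz]
  have s1 := hasSum_thetaTerm hQ0 hQ1 (neg_ne_zero.2 hz0.ne')
  have s2 := hasSum_thetaTerm hQ0 hQ1 hz0.ne'
  have hinj : Function.Injective (fun m : ℤ => 2 * m) := fun a b h => by
    simpa using h
  -- terms of odd index cancel in the sum of the two series, and those of even index double
  have s3 := (hinj.hasSum_iff (f := fun j => thetaTerm Q (-z) j + thetaTerm Q z j) (by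
    intro j hj
    have ho : Odd j := by
      rw [← Int.not_even_iff_odd]
      rintro ⟨m, rfl⟩
      exact hj ⟨m, by ring⟩
    simp [thetaTerm, ho.neg_zpow])).2 (s1.add s2)
  rw [← tsum_mul_left]
  refine (tsum_congr fun m => ?_).trans (s3.tsum_eq.trans (congrArg₂ (· + ·) ?_ ?_))
  · have he : Even (2 * m) := even_two_mul m
    simp only [Function.comp, thetaTerm, he.neg_zpow]
    rw [← Real.rpow_intCast, hQ, hz, ← Real.rpow_mul hq0.le, ← Real.rpow_mul hq0.le,
      ← Real.rpow_add hq0, two_mul]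
    push_cast
    congr 2 <;> ring
  · refine tprod_congr fun k => ?_
    rw [inv_neg]; ring
  · refine tprod_congr fun k => ?_
    ring
end
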